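/- arXiv:2106.11474 — 6 statements merged into one kernel-verified Lean document; each statement's English description precedes it below -/
import Mathlib

section
/- Let R be a commutative ring, S a multiplicative subset of R, and f : M → N an R-linear map of R-modules that is an S-isomorphism. Then there exist an R-linear map g : N → M and an element s ∈ S such that f ∘ g = s·id_N and g ∘ f = s·id_M. -/
universe u

/-- A module is uniformly `S`-torsion if a single `s ∈ S` kills it. -/
def UnifSTorsion {R : Type u} [CommRing R] (S : Submonoid R) (M : Type*) [Zero M] [SMul R M] :
    Prop :=
  ∃ s ∈ S, ∀ m : M, s • m = (0 : M)

/-!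
An element `a` killing `ker f` makes multiplication by `a` on `M` factor through `range f`, and an
element `b` killing `coker f` makes multiplication by `b` on `N` land in `range f`. Composing
`N → range f → M` gives `g`, and both composites of `f` with `g` are multiplication by `a * b`.
-/

section Ring

variable {R M N P : Type*} [Ring R] [AddCommGroup M] [Module R M] [AddCommGroup N] [Module R N]
  [AddCommGroup P] [Module R P]

theorem exists_comp_eq_of_surjective_of_ker_le_ker {p : M →ₗ[R] N} (hp : Function.Surjective p)
    {h : M →ₗ[R] P} (hker : LinearMap.ker p ≤ LinearMap.ker h) :
    ∃ k : N →ₗ[R] P, k ∘ₗ p = h := by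
  refine ⟨(LinearMap.ker p).liftQ h hker ∘ₗ (p.quotKerEquivOfSurjective hp).symm, ?_⟩
  ext m
  simp

theorem smul_mem_of_mem_annihilator_quotient {p : Submodule R M} {b : R}
    (hb : b ∈ Module.annihilator R (M ⧸ p)) (m : M) : b • m ∈ p :=
  (Submodule.Quotient.mk_eq_zero p).1 (Module.mem_annihilator.1 hb (Submodule.Quotient.mk m))

end Ring

section CommRing

variable {R M N : Type*} [CommRing R] [AddCommGroup M] [Module R M] [AddCommGroup N] [Module R N]
  {f : M →ₗ[R] N} {a b : R}

theorem exists_comp_rangeRestrict_eq_smul_id (ha : a ∈ (LinearMap.ker f).annihilator) :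
    ∃ h : LinearMap.range f →ₗ[R] M, h ∘ₗ f.rangeRestrict = a • LinearMap.id :=
  exists_comp_eq_of_surjective_of_ker_le_ker f.surjective_rangeRestrict
    (f.ker_rangeRestrict.le.trans (Submodule.mem_annihilator'.1 ha))

theorem exists_subtype_comp_eq_smul_id {p : Submodule R N}
    (hb : b ∈ Module.annihilator R (N ⧸ p)) :
    ∃ k : N →ₗ[R] p, p.subtype ∘ₗ k = b • LinearMap.id :=
  ⟨(b • LinearMap.id).codRestrict p (smul_mem_of_mem_annihilator_quotient hb),
    LinearMap.subtype_comp_codRestrict ..⟩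

theorem comp_eq_smul_subtype_of_comp_rangeRestrict_eq_smul_id {h : LinearMap.range f →ₗ[R] M}
    (hh : h ∘ₗ f.rangeRestrict = a • LinearMap.id) :
    f ∘ₗ h = a • (LinearMap.range f).subtype := by
  rw [← LinearMap.cancel_right f.surjective_rangeRestrict, LinearMap.comp_assoc, hh,
    LinearMap.smul_comp, LinearMap.comp_smul, LinearMap.comp_id,
    LinearMap.subtype_comp_codRestrict]

theorem comp_eq_smul_rangeRestrict_of_subtype_comp_eq_smul_id {k : N →ₗ[R] LinearMap.range f}
    (hk : (LinearMap.range f).subtype ∘ₗ k = b • LinearMap.id) :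
    k ∘ₗ f = b • f.rangeRestrict := by
  rw [← LinearMap.cancel_left (LinearMap.range f).injective_subtype, ← LinearMap.comp_assoc, hk,
    LinearMap.smul_comp, LinearMap.comp_smul, LinearMap.id_comp,
    LinearMap.subtype_comp_codRestrict]

theorem exists_comp_eq_mul_smul_id (ha : a ∈ (LinearMap.ker f).annihilator)
    (hb : b ∈ Module.annihilator R (N ⧸ LinearMap.range f)) :
    ∃ g : N →ₗ[R] M, f ∘ₗ g = (a * b) • LinearMap.id ∧ g ∘ₗ f = (a * b) • LinearMap.id := by
  obtain ⟨h, hh⟩ := exists_comp_rangeRestrict_eq_smul_id ha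
  obtain ⟨k, hk⟩ := exists_subtype_comp_eq_smul_id hb
  refine ⟨h ∘ₗ k, ?_, ?_⟩
  · calc f ∘ₗ (h ∘ₗ k) = (f ∘ₗ h) ∘ₗ k := (LinearMap.comp_assoc ..).symm
      _ = a • ((LinearMap.range f).subtype ∘ₗ k) := by
        rw [comp_eq_smul_subtype_of_comp_rangeRestrict_eq_smul_id hh, LinearMap.smul_comp]
      _ = (a * b) • LinearMap.id := by rw [hk, mul_smul]
  · calc (h ∘ₗ k) ∘ₗ f = h ∘ₗ (k ∘ₗ f) := LinearMap.comp_assoc ..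
      _ = b • (h ∘ₗ f.rangeRestrict) := by
        rw [comp_eq_smul_rangeRestrict_of_subtype_comp_eq_smul_id hk, LinearMap.comp_smul]
      _ = (a * b) • LinearMap.id := by rw [hh, smul_smul, mul_comm]

end CommRing

/-- If `f : M → N` is an `S`-isomorphism (its kernel and cokernel are uniformly `S`-torsion),
then there are `g : N → M` and `s ∈ S` with `f ∘ g = s • id` and `g ∘ f = s • id`. -/
theorem stmt0 {R : Type u} [CommRing R] (S : Submonoid R)
    {M N : Type u} [AddCommGroup M] [Module R M] [AddCommGroup N] [Module R N]
    (f : M →ₗ[R] N)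
    (hker : UnifSTorsion S (LinearMap.ker f))
    (hcoker : UnifSTorsion S (N ⧸ LinearMap.range f)) :
    ∃ (g : N →ₗ[R] M) (s : R), s ∈ S ∧
      f ∘ₗ g = s • (LinearMap.id : N →ₗ[R] N) ∧
      g ∘ₗ f = s • (LinearMap.id : M →ₗ[R] M) := by
  obtain ⟨a, haS, ha⟩ := hker
  obtain ⟨b, hbS, hb⟩ := hcoker
  obtain ⟨g, hfg, hgf⟩ :=
    exists_comp_eq_mul_smul_id (Module.mem_annihilator.2 ha) (Module.mem_annihilator.2 hb)
  exact ⟨g, a * b, S.mul_mem haS hbS, hfg, hgf⟩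
end

section
/- Let R be a commutative ring, S a multiplicative subset of R, and f : M → N an S-isomorphism of R-modules. Then for every R-module L and every integer n ≥ 0, the induced map Ext^n_R(L, f) : Ext^n_R(L, M) → Ext^n_R(L, N) is an S-isomorphism. -/
open CategoryTheory

universe u

/-- `f` is an `S`-isomorphism: its kernel and cokernel are uniformly `S`-torsion,
expressed elementwise. -/
def IsSIso {R : Type u} [CommRing R] (S : Submonoid R) {M N : Type*}
    [Zero M] [SMul R M] [Zero N] [SMul R N] (f : M → N) : Prop :=
  (∃ s ∈ S, ∀ x : M, f x = 0 → s • x = 0) ∧ (∃ s ∈ S, ∀ y : N, ∃ x : M, s • y = f x)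

/-!
An `S`-isomorphism is the same thing as a linear map `f` with an inverse up to a scalar `r ∈ S`:
a linear map `g` such that `g ∘ f` and `f ∘ g` are multiplication by `r`. Every `R`-linear functor
preserves such pairs, and `Ext^n(L, -)` is `R`-linear because it is obtained by deriving a functor
that depends `R`-linearly on the second variable.
-/

section Modules

variable {R : Type*} [CommRing R]

theorem exists_comp_eq_smul_id {M N : Type*} [AddCommGroup M] [AddCommGroup N] [Module R M]
    [Module R N] (f : M →ₗ[R] N) {s t : R} (hs : ∀ x, f x = 0 → s • x = 0)
    (ht : ∀ y, ∃ x, t • y = f x) :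
    ∃ g : N →ₗ[R] M, g ∘ₗ f = (s * t) • .id ∧ f ∘ₗ g = (s * t) • .id := by
  choose p hp using ht
  have smul_eq_smul {x x' : M} (h : f x = f x') : s • x = s • x' := by
    rw [← sub_eq_zero, ← smul_sub]
    exact hs _ (by rw [map_sub, h, sub_self])
  -- The choice of `p y` is ambiguous only by `ker f`, so `s • p y` depends linearly on `y`.
  let g : N →ₗ[R] M :=
    { toFun y := s • p y
      map_add' y z := by
        rw [← smul_add]
        exact smul_eq_smul (by rw [map_add, ← hp, ← hp, ← hp, smul_add])
      map_smul' r y := by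
        rw [RingHom.id_apply, smul_comm r s]
        exact smul_eq_smul (by rw [map_smul, ← hp, ← hp, smul_comm]) }
  refine ⟨g, LinearMap.ext fun x ↦ ?_, LinearMap.ext fun y ↦ ?_⟩
  · calc s • p (f x) = s • t • x := smul_eq_smul (by rw [← hp, map_smul])
      _ = (s * t) • x := smul_smul s t x
  · calc f (s • p y) = s • t • y := by rw [map_smul, hp]
      _ = (s * t) • y := smul_smul s t y

theorem isSIso_iff_exists_comp_eq_smul_id {S : Submonoid R} {M N : Type*} [AddCommGroup M]
    [AddCommGroup N] [Module R M] [Module R N] {f : M →ₗ[R] N} :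
    IsSIso S f ↔ ∃ r ∈ S, ∃ g : N →ₗ[R] M, g ∘ₗ f = r • .id ∧ f ∘ₗ g = r • .id := by
  constructor
  · rintro ⟨⟨s, hsS, hs⟩, t, htS, ht⟩
    exact ⟨s * t, S.mul_mem hsS htS, exists_comp_eq_smul_id f hs ht⟩
  · rintro ⟨r, hr, g, hgf, hfg⟩
    refine ⟨⟨r, hr, fun x hx ↦ ?_⟩, r, hr, fun y ↦ ⟨g y, (LinearMap.congr_fun hfg y).symm⟩⟩
    calc r • x = g (f x) := (LinearMap.congr_fun hgf x).symm
      _ = 0 := by rw [hx, map_zero]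

theorem IsSIso.map_of_linear {S : Submonoid R} {M N : ModuleCat R} {f : M ⟶ N}
    (hf : IsSIso S f) (F : ModuleCat R ⥤ ModuleCat R) [F.Linear R] : IsSIso S (F.map f) := by
  obtain ⟨r, hr, g, hgf, hfg⟩ := isSIso_iff_exists_comp_eq_smul_id (f := f.hom).1 hf
  have hgf : f ≫ ModuleCat.ofHom g = r • 𝟙 M := ModuleCat.hom_ext hgf
  have hfg : ModuleCat.ofHom g ≫ f = r • 𝟙 N := ModuleCat.hom_ext hfg
  refine isSIso_iff_exists_comp_eq_smul_id (f := (F.map f).hom).2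
    ⟨r, hr, (F.map (ModuleCat.ofHom g)).hom, ?_, ?_⟩
  · rw [← ModuleCat.hom_comp, ← F.map_comp, hgf, F.map_smul, F.map_id, ModuleCat.hom_smul,
      ModuleCat.hom_id]
  · rw [← ModuleCat.hom_comp, ← F.map_comp, hfg, F.map_smul, F.map_id, ModuleCat.hom_smul,
      ModuleCat.hom_id]

end Modules

section LinearFunctors

variable {R : Type*} [Semiring R] {C D : Type*} [Category* C] [Category* D]

/-- The `R`-linear structure on `Cᵒᵖ` making `unop` an `R`-linear map on morphisms; contravariant
functors such as `linearYoneda R C` at an object are left derived as functors to an opposite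
category, so scalars must act there. -/
instance linearOpposite [Preadditive C] [Linear R C] : Linear R Cᵒᵖ where
  homModule X Y := (opEquiv X Y).module R
  smul_comp _ _ _ r f g := Quiver.Hom.unop_inj (Linear.comp_smul _ _ _ g.unop r f.unop)
  comp_smul _ _ _ f r g := Quiver.Hom.unop_inj (Linear.smul_comp _ _ _ r g.unop f.unop)

instance homologyFunctor_linear [Preadditive D] [CategoryWithHomology D] [Linear R D] {ι : Type*}
    (c : ComplexShape ι) (i : ι) :
    (HomologicalComplex.homologyFunctor D c i).Linear R where
  map_smul f r :=
    ShortComplex.homologyMap_smul ((HomologicalComplex.shortComplexFunctor D c i).map f) r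

theorem leftDerived_smul [Abelian C] [HasProjectiveResolutions C] [Abelian D] [Linear R D]
    {F G : C ⥤ D} [F.Additive] [G.Additive] (r : R) (α : F ⟶ G) (n : ℕ) :
    NatTrans.leftDerived (r • α) n = r • NatTrans.leftDerived α n := by
  ext X
  let P := projectiveResolution X
  have app_smul : (NatTrans.mapHomologicalComplex (r • α) (ComplexShape.down ℕ)).app P.complex =
      r • (NatTrans.mapHomologicalComplex α (ComplexShape.down ℕ)).app P.complex := rfl
  rw [NatTrans.app_smul, P.leftDerived_app_eq, P.leftDerived_app_eq, app_smul, Functor.map_smul,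
    Linear.smul_comp, Linear.comp_smul]

end LinearFunctors

section Ext

variable {R : Type*} [CommRing R] {C : Type*} [Category* C]

instance linearYoneda_linear [Preadditive C] [Linear R C] : (linearYoneda R C).Linear R where
  map_smul f r := by
    ext X g
    exact Linear.comp_smul _ _ _ g r f

instance ext_obj_linear [Abelian C] [Linear R C] [EnoughProjectives C] (n : ℕ) (X : Cᵒᵖ) :
    ((Ext R C n).obj X).Linear R where
  map_smul {Y Z} f r := by
    have rightOp_smul : NatTrans.rightOp ((linearYoneda R C).map (r • f)) =
        r • NatTrans.rightOp ((linearYoneda R C).map f) := by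
      rw [Functor.map_smul]
      rfl
    have derived_smul := leftDerived_smul r (NatTrans.rightOp ((linearYoneda R C).map f)) n
    rw [← rightOp_smul] at derived_smul
    exact congrArg (fun α ↦ (α.app X.unop).unop) derived_smul

end Ext

/-- If `f : M → N` is an `S`-isomorphism of `R`-modules, then for every `R`-module `L`
and every `n ≥ 0`, the induced map `Ext^n_R(L, M) → Ext^n_R(L, N)` is an `S`-isomorphism. -/
theorem stmt1 {R : Type u} [CommRing R] (S : Submonoid R)
    {M N : ModuleCat.{u} R} (f : M ⟶ N) (hf : IsSIso S (⇑f))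
    (L : ModuleCat.{u} R) (n : ℕ) :
    IsSIso S (⇑(((Ext R (ModuleCat.{u} R) n).obj (Opposite.op L)).map f)) := by
  exact hf.map_of_linear _
end

section
/- Let R be a commutative ring, S a multiplicative subset of R, and 0 → A → B → C → 0 an S-exact sequence of R-modules in which B is S-projective. Then for every R-module N and every integer n ≥ 1, there exists an S-isomorphism between Ext^n_R(A, N) and Ext^{n+1}_R(C, N). -/
open CategoryTheory

universe u

/-- The sequence `X --u--> Y --v--> Z` is `S`-exact at `Y`. -/
def SExactAt {R : Type u} [CommRing R] (S : Submonoid R) {X Y Z : Type*}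
    [Zero Y] [SMul R Y] [Zero Z] (u : X → Y) (v : Y → Z) : Prop :=
  ∃ s ∈ S, (∀ y : Y, v y = 0 → ∃ x : X, s • y = u x) ∧ ∀ x : X, v (s • u x) = 0

/-!
Up to `S`-isomorphism the `S`-exact sequence may be replaced by the short exact sequence
`0 → ker g → B → im g → 0`: some multiple `t • f` corestricts to an `S`-isomorphism `A → ker g`,
and the inclusion `im g → C` is an `S`-isomorphism. An `S`-isomorphism has an inverse up to
multiplication by some `s ∈ S`, a property that every `R`-linear functor preserves, so `Ext(-, N)`
preserves `S`-isomorphisms. For the short exact sequence, the kernel and the cokernel of the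
connecting map `Ext^n(ker g, N) → Ext^{n+1}(im g, N)` are controlled by `Ext^n(B, N)` and
`Ext^{n+1}(B, N)`, which are uniformly `S`-torsion by dimension shifting in `N`.
-/

universe v

section UniformTorsion

variable {R : Type*} [CommRing R] {S : Submonoid R} {M N P : Type*}
  [AddCommGroup M] [Module R M] [AddCommGroup N] [Module R N] [AddCommGroup P] [Module R P]

lemma UnifSTorsion.of_injective {f : M →ₗ[R] N} (hf : Function.Injective f)
    (hN : UnifSTorsion S N) : UnifSTorsion S M := by
  obtain ⟨s, hs, hsN⟩ := hN
  exact ⟨s, hs, fun x ↦ hf (by rw [map_smul, map_zero, hsN])⟩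

namespace IsSIso

lemma of_linearEquiv (e : M ≃ₗ[R] N) : IsSIso S e :=
  ⟨⟨1, S.one_mem, fun x hx ↦ by simpa using hx⟩, ⟨1, S.one_mem, fun y ↦ ⟨e.symm y, by simp⟩⟩⟩

lemma comp {g : N →ₗ[R] P} {f : M →ₗ[R] N} (hg : IsSIso S g) (hf : IsSIso S f) :
    IsSIso S (g ∘ₗ f) := by
  obtain ⟨⟨s, hs, hsf⟩, t, ht, htf⟩ := hf
  obtain ⟨⟨s', hs', hsg⟩, t', ht', htg⟩ := hg
  refine ⟨⟨s * s', S.mul_mem hs hs', fun x hx ↦ ?_⟩, ⟨t * t', S.mul_mem ht ht', fun z ↦ ?_⟩⟩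
  · rw [mul_smul]
    exact hsf _ (by rw [map_smul]; exact hsg _ hx)
  · obtain ⟨y, hy⟩ := htg z
    obtain ⟨x, hx⟩ := htf y
    exact ⟨x, by rw [mul_smul, hy, ← map_smul, hx, LinearMap.comp_apply]⟩

lemma of_comp_eq_smul_id {f : M →ₗ[R] N} {k : N →ₗ[R] M} {s : R} (hs : s ∈ S)
    (hfk : f ∘ₗ k = s • LinearMap.id) (hkf : k ∘ₗ f = s • LinearMap.id) : IsSIso S f := by
  refine ⟨⟨s, hs, fun x hx ↦ ?_⟩, ⟨s, hs, fun y ↦ ⟨k y, ?_⟩⟩⟩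
  · simpa [hx] using (LinearMap.congr_fun hkf x).symm
  · simpa using (LinearMap.congr_fun hfk y).symm

lemma exists_comp_eq_smul_id {f : M →ₗ[R] N} (hf : IsSIso S f) :
    ∃ s ∈ S, ∃ k : N →ₗ[R] M, f ∘ₗ k = s • LinearMap.id ∧ k ∘ₗ f = s • LinearMap.id := by
  obtain ⟨⟨s, hs, hsf⟩, t, ht, htf⟩ := hf
  let mulT : N →ₗ[R] LinearMap.range f :=
    (t • LinearMap.id).codRestrict _ fun y ↦ (htf y).imp fun _ ↦ Eq.symm
  let mulS : M ⧸ LinearMap.ker f →ₗ[R] M :=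
    (LinearMap.ker f).liftQ (s • LinearMap.id) fun x hx ↦ by simpa using hsf x hx
  let k : N →ₗ[R] M := mulS ∘ₗ f.quotKerEquivRange.symm.toLinearMap ∘ₗ mulT
  have k_apply {x : M} {y : N} (h : t • y = f x) : k y = s • x := by
    have mulT_apply : mulT y = ⟨f x, x, rfl⟩ := Subtype.ext h
    have symm_apply : f.quotKerEquivRange.symm ⟨f x, x, rfl⟩ = (LinearMap.ker f).mkQ x :=
      f.quotKerEquivRange_symm_apply_image x _
    simp [k, mulS, mulT_apply, symm_apply]
  refine ⟨s * t, S.mul_mem hs ht, k, ?_, ?_⟩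
  · ext y
    obtain ⟨x, hx⟩ := htf y
    simp [k_apply hx, ← hx, mul_smul]
  · ext x
    simp [k_apply (map_smul f t x).symm, mul_smul]

lemma exists_isSIso_symm {f : M →ₗ[R] N} (hf : IsSIso S f) : ∃ k : N →ₗ[R] M, IsSIso S k := by
  obtain ⟨s, hs, k, hfk, hkf⟩ := hf.exists_comp_eq_smul_id
  exact ⟨k, .of_comp_eq_smul_id hs hkf hfk⟩

lemma range_subtype {g : M →ₗ[R] N} (hg : ∃ s ∈ S, ∀ y : N, ∃ x : M, s • y = g x) :
    IsSIso S (LinearMap.range g).subtype := by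
  obtain ⟨s, hs, hsg⟩ := hg
  refine ⟨⟨1, S.one_mem, fun y hy ↦ by simpa using hy⟩, ⟨s, hs, fun y ↦ ?_⟩⟩
  obtain ⟨x, hx⟩ := hsg y
  exact ⟨⟨g x, x, rfl⟩, hx⟩

end IsSIso

lemma SExactAt.rangeRestrict {f : M →ₗ[R] N} {g : N →ₗ[R] P} (hfg : SExactAt S f g) :
    SExactAt S f g.rangeRestrict := by
  simpa [SExactAt, Subtype.ext_iff] using hfg

lemma SExactAt.exists_isSIso_ker {f : M →ₗ[R] N} {g : N →ₗ[R] P} (hfg : SExactAt S f g)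
    (hf : ∃ s ∈ S, ∀ x : M, f x = 0 → s • x = 0) :
    ∃ a : M →ₗ[R] LinearMap.ker g, IsSIso S a := by
  obtain ⟨s, hs, hsf⟩ := hf
  obtain ⟨t, ht, hker, him⟩ := hfg
  let a : M →ₗ[R] LinearMap.ker g := (t • f).codRestrict _ him
  refine ⟨a, ⟨s * t, S.mul_mem hs ht, fun x hx ↦ ?_⟩, ⟨t * t, S.mul_mem ht ht, fun y ↦ ?_⟩⟩
  · rw [mul_smul]
    exact hsf _ ((map_smul f t x).trans (congrArg Subtype.val hx))
  · obtain ⟨x, hx⟩ := hker y.1 y.2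
    have hax : (a x : N) = t • f x := rfl
    exact ⟨x, Subtype.ext (by rw [hax, ← hx, smul_smul, Submodule.coe_smul])⟩

end UniformTorsion

section ExtComparison

variable {R : Type*} [Ring R] {C : Type*} [Category* C] [Abelian C] [Linear R C] [HasExt C]
  {X : C} (P : ProjectiveResolution X)

lemma smul_extMk {Y : C} {n : ℕ} (r : R) (f : P.complex.X n ⟶ Y) (m : ℕ) (hm : n + 1 = m)
    (hf : P.complex.d m n ≫ f = 0) :
    r • P.extMk f m hm hf = P.extMk (r • f) m hm (by simp [hf]) := by
  simp [Abelian.Ext.smul_eq_comp_mk₀, ProjectiveResolution.extMk_comp_mk₀]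

variable (R) in
/-- The `R`-linear map sending an `n`-cocycle of the complex `Hom(P, Y)`, for a projective
resolution `P` of `X`, to its class in `Ext X Y n`. The indices `i` and `m` stand for `n - 1` and
`n + 1`. -/
noncomputable def cocycleToExt (Y : C) (i n m : ℕ) (hm : n + 1 = m) :
    LinearMap.ker ((P.complex.linearYonedaObj R Y).sc' i n m).g.hom →ₗ[R]
      Abelian.Ext X Y n where
  toFun f := P.extMk (Y := Y) f.1 m hm f.2
  map_add' f g := (P.add_extMk _ _ m hm f.2 g.2).symm
  map_smul' r f := (smul_extMk P r _ m hm f.2).symm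

lemma cocycleToExt_surjective (Y : C) (i n m : ℕ) (hm : n + 1 = m) :
    Function.Surjective (cocycleToExt R P Y i n m hm) := fun α ↦ by
  obtain ⟨f, hf, rfl⟩ := P.extMk_surjective α m hm
  exact ⟨⟨f, hf⟩, rfl⟩

lemma ker_cocycleToExt (Y : C) (i n m : ℕ) (hi : i + 1 = n) (hm : n + 1 = m) :
    LinearMap.ker (cocycleToExt R P Y i n m hm) =
      LinearMap.range ((P.complex.linearYonedaObj R Y).sc' i n m).moduleCatToCycles := by
  ext f
  refine (P.extMk_eq_zero_iff _ m hm f.2 i hi).trans ?_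
  exact ⟨fun ⟨g, hg⟩ ↦ ⟨g, Subtype.ext hg⟩, fun ⟨g, hg⟩ ↦ ⟨g, congrArg Subtype.val hg⟩⟩

variable (R) in
/-- In positive degrees, the left derived functors `Ext R C` of `Hom` agree with the `Ext` modules
`CategoryTheory.Abelian.Ext` defined by morphisms in the derived category, for which Mathlib has
the long exact sequences. -/
noncomputable def extLinearEquivAbelianExt [EnoughProjectives C] (X Y : C) (n : ℕ) :
    ((Ext R C (n + 1)).obj (Opposite.op X)).obj Y ≃ₗ[R] Abelian.Ext X Y (n + 1) :=
  let P := projectiveResolution X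
  (P.isoExt (n + 1) Y ≪≫ HomologicalComplex.homologyIsoSc' _ n (n + 1) (n + 2)
    (by simp) (by simp) ≪≫ ShortComplex.moduleCatHomologyIso _).toLinearEquiv ≪≫ₗ
  Submodule.quotEquivOfEq _ _ (ker_cocycleToExt P Y n (n + 1) (n + 2) rfl rfl).symm ≪≫ₗ
  (cocycleToExt R P Y n (n + 1) (n + 2) rfl).quotKerEquivOfSurjective
    (cocycleToExt_surjective P Y n (n + 1) (n + 2) rfl)

end ExtComparison

section LinearAbelian

variable {R : Type*} [CommRing R] {S : Submonoid R}
  {C : Type*} [Category* C] [Abelian C] [Linear R C] [HasExt C]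

lemma isSIso_precomp_mk₀_of_comp_eq_smul_id {X X' : C} {h : X ⟶ X'} {k : X' ⟶ X} {s : R}
    (hs : s ∈ S) (hhk : h ≫ k = s • 𝟙 X) (hkh : k ≫ h = s • 𝟙 X') (Y : C) (n : ℕ) :
    IsSIso S ((Abelian.Ext.mk₀ h).precompOfLinear R Y (zero_add n)) := by
  refine .of_comp_eq_smul_id (k := (Abelian.Ext.mk₀ k).precompOfLinear R Y (zero_add n)) hs ?_ ?_
  · ext α
    simp [hhk, Abelian.Ext.mk₀_smul]
  · ext α
    simp [hkh, Abelian.Ext.mk₀_smul]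

variable (S) in
/-- An object `X` of an `R`-linear abelian category is `S`-projective if `Ext X Y 1` is uniformly
`S`-torsion for every object `Y`. The element of `S` killing it may depend on `Y`. -/
def IsSProjective (X : C) : Prop :=
  ∀ Y : C, UnifSTorsion S (Abelian.Ext X Y 1)

namespace IsSProjective

lemma unifSTorsion_ext_succ [EnoughInjectives C] {X : C} (hX : IsSProjective S X) (Y : C)
    (n : ℕ) : UnifSTorsion S (Abelian.Ext X Y (n + 1)) := by
  induction n generalizing Y with
  | zero => exact hX Y
  | succ n ih =>
    let T := ShortComplex.mk (Injective.ι Y) (Limits.cokernel.π (Injective.ι Y)) (by simp)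
    have hT : T.ShortExact := { exact := ShortComplex.exact_cokernel _ }
    obtain ⟨s, hs, hsT⟩ := ih T.X₃
    refine ⟨s, hs, fun α ↦ ?_⟩
    obtain ⟨β, rfl⟩ :=
      Abelian.Ext.covariant_sequence_exact₁ X hT α (Abelian.Ext.eq_zero_of_injective _) rfl
    rw [← Abelian.Ext.smul_comp, hsT, Abelian.Ext.zero_comp]

lemma isSIso_precomp_extClass [EnoughInjectives C] {T : ShortComplex C}
    (hX₂ : IsSProjective S T.X₂) (hT : T.ShortExact) (Y : C) (n : ℕ) :
    IsSIso S (hT.extClass.precompOfLinear R Y (add_comm 1 (n + 1))) := by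
  obtain ⟨s, hs, hsExt⟩ := hX₂.unifSTorsion_ext_succ Y n
  obtain ⟨t, ht, htExt⟩ := hX₂.unifSTorsion_ext_succ Y (n + 1)
  refine ⟨⟨s, hs, fun α hα ↦ ?_⟩, ⟨t, ht, fun β ↦ ?_⟩⟩
  · obtain ⟨γ, rfl⟩ :=
      Abelian.Ext.contravariant_sequence_exact₁ hT Y α (add_comm 1 (n + 1)) hα
    rw [← Abelian.Ext.comp_smul, hsExt, Abelian.Ext.comp_zero]
  · obtain ⟨α, hα⟩ := Abelian.Ext.contravariant_sequence_exact₃ hT Y (t • β)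
      (by rw [Abelian.Ext.comp_smul, htExt]) (add_comm 1 (n + 1))
    exact ⟨α, hα.symm⟩

end IsSProjective

end LinearAbelian

section ModuleCategory

variable {R : Type*} [CommRing R] [Small.{v} R] {S : Submonoid R}

lemma IsSIso.precomp_mk₀ {X X' : ModuleCat.{v} R} {h : X ⟶ X'} (hh : IsSIso S h)
    (Y : ModuleCat.{v} R) (n : ℕ) :
    IsSIso S ((Abelian.Ext.mk₀ h).precompOfLinear R Y (zero_add n)) := by
  obtain ⟨s, hs, k, hhk, hkh⟩ := exists_comp_eq_smul_id (f := h.hom) hh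
  exact isSIso_precomp_mk₀_of_comp_eq_smul_id (k := ModuleCat.ofHom k) hs
    (ModuleCat.hom_ext hkh) (ModuleCat.hom_ext hhk) Y n

variable (S) in
theorem stmt4_general {A B C : ModuleCat.{v} R} (f : A ⟶ B) (g : B ⟶ C)
    (hA : ∃ s ∈ S, ∀ x : A, f x = 0 → s • x = (0 : A))
    (hB : SExactAt S (⇑f) (⇑g))
    (hC : ∃ s ∈ S, ∀ c : C, ∃ b : B, s • c = g b)
    (hBproj : ∀ N : ModuleCat.{v} R,
      UnifSTorsion S (((Ext R (ModuleCat.{v} R) 1).obj (Opposite.op B)).obj N))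
    (N : ModuleCat.{v} R) (n : ℕ) (hn : 1 ≤ n) :
    ∃ e : ((Ext R (ModuleCat.{v} R) n).obj (Opposite.op A)).obj N ⟶
          ((Ext R (ModuleCat.{v} R) (n + 1)).obj (Opposite.op C)).obj N,
      IsSIso S (⇑e) := by
  obtain ⟨n, rfl⟩ := Nat.exists_eq_add_of_le' hn
  have hBS : IsSProjective S B := fun N ↦
    (hBproj N).of_injective (extLinearEquivAbelianExt R B N 0).symm.injective
  let T := g.hom.rangeRestrict.shortComplexKer
  have hT : T.ShortExact := LinearMap.shortExact_shortComplexKer g.hom.surjective_rangeRestrict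
  obtain ⟨a, ha⟩ := SExactAt.exists_isSIso_ker (SExactAt.rangeRestrict (g := g.hom) hB) hA
  obtain ⟨a', ha'⟩ := ha.exists_isSIso_symm
  obtain ⟨c', hc'⟩ := (IsSIso.range_subtype (g := g.hom) hC).exists_isSIso_symm
  have hker := IsSIso.precomp_mk₀ (h := ModuleCat.ofHom a') ha' N (n + 1)
  have hconnecting := hBS.isSIso_precomp_extClass hT N n
  have hrange := IsSIso.precomp_mk₀ (h := ModuleCat.ofHom c') hc' N (n + 1 + 1)
  have hA_ext := IsSIso.of_linearEquiv (S := S) (extLinearEquivAbelianExt R A N n)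
  have hC_ext := IsSIso.of_linearEquiv (S := S) (extLinearEquivAbelianExt R C N (n + 1)).symm
  exact ⟨ModuleCat.ofHom _, hC_ext.comp <| hrange.comp <| hconnecting.comp <| hker.comp hA_ext⟩

end ModuleCategory

/-- If `0 → A → B → C → 0` is `S`-exact with `B` `S`-projective, then for every module `N`
and every `n ≥ 1` there is an `S`-isomorphism `Ext^n(A, N) → Ext^{n+1}(C, N)`. -/
theorem stmt4 {R : Type u} [CommRing R] (S : Submonoid R)
    {A B C : ModuleCat.{u} R} (f : A ⟶ B) (g : B ⟶ C)
    (hA : ∃ s ∈ S, ∀ x : A, f x = 0 → s • x = (0 : A))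
    (hB : SExactAt S (⇑f) (⇑g))
    (hC : ∃ s ∈ S, ∀ c : C, ∃ b : B, s • c = g b)
    (hBproj : ∀ N : ModuleCat.{u} R,
      UnifSTorsion S (((Ext R (ModuleCat.{u} R) 1).obj (Opposite.op B)).obj N)) :
    ∀ (N : ModuleCat.{u} R) (n : ℕ), 1 ≤ n →
      ∃ e : ((Ext R (ModuleCat.{u} R) n).obj (Opposite.op A)).obj N ⟶
            ((Ext R (ModuleCat.{u} R) (n + 1)).obj (Opposite.op C)).obj N,
        IsSIso S (⇑e) :=
  stmt4_general S f g hA hB hC hBproj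
end

section
/- Let R be a commutative ring, S a multiplicative subset of R, M an R-module and n ≥ 1 an integer such that Ext^{n+1}_R(M, N) is uniformly S-torsion for every R-module N. If 0 → F_n → F_{n-1} → ⋯ → F_1 → F_0 → M → 0 is an exact sequence of R-modules in which F_0, F_1, …, F_{n-1} are projective, then F_n is S-projective. -/
open CategoryTheory

universe u

/-!
`Ext R C n` is the left derived functor of Hom, computed by a projective resolution of the first
argument. If `0 → X₁ → X₂ → X₃ → 0` is exact with `X₂` projective, a projective resolution `P` of
`X₁` gives the projective resolution `⋯ → P₁ → P₀ → X₂` of `X₃`. Applying `Hom(-, N)` to it yields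
the cochain complex of `P` shifted by one, with one more term in degree zero, so that
`Ext^{n+2}(X₃, N) ≅ Ext^{n+1}(X₁, N)`. Cutting the given exact sequence into short exact sequences
and iterating yields `Ext^{n+1}(M, N) ≅ Ext^1(F_n, N)`.
-/

open Limits

lemma UnifSTorsion.of_linearEquiv {R : Type u} [CommRing R] {S : Submonoid R} {A B : Type*}
    [AddCommMonoid A] [AddCommMonoid B] [Module R A] [Module R B] (hA : UnifSTorsion S A)
    (f : A ≃ₗ[R] B) : UnifSTorsion S B := by
  obtain ⟨s, hs, hsA⟩ := hA
  exact ⟨s, hs, f.surjective.forall.2 fun a ↦ by rw [← map_smul, hsA, map_zero]⟩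

section Exactness

variable {C : Type*} [Category* C]

lemma exact_comp_mono_iff [HasZeroMorphisms C] {W X Y Z : C} {f : W ⟶ X} {g : X ⟶ Y} {i : Y ⟶ Z}
    [Mono i] {w : f ≫ g = 0} {w' : f ≫ g ≫ i = 0} :
    (ShortComplex.mk f (g ≫ i) w').Exact ↔ (ShortComplex.mk f g w).Exact :=
  (ShortComplex.exact_iff_of_epi_of_isIso_of_mono (S₁ := .mk f g w) (S₂ := .mk f (g ≫ i) w')
    { τ₁ := 𝟙 W, τ₂ := 𝟙 X, τ₃ := i }).symm

lemma exact_epi_comp_iff [HasZeroMorphisms C] {W X Y Z : C} {p : W ⟶ X} {f : X ⟶ Y} {g : Y ⟶ Z}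
    [Epi p] {w : f ≫ g = 0} {w' : (p ≫ f) ≫ g = 0} :
    (ShortComplex.mk (p ≫ f) g w').Exact ↔ (ShortComplex.mk f g w).Exact :=
  ShortComplex.exact_iff_of_epi_of_isIso_of_mono (S₁ := .mk (p ≫ f) g w') (S₂ := .mk f g w)
    { τ₁ := p, τ₂ := 𝟙 Y, τ₃ := 𝟙 Z }

lemma quasiIso_toSingle₀Equiv_symm [Abelian C] {P : ChainComplex C ℕ} {X : C} {ε : P.X 0 ⟶ X}
    (hε : Epi ε) {w : P.d 1 0 ≫ ε = 0} (hexact₀ : (ShortComplex.mk _ _ w).Exact)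
    (hexact : ∀ n, (ShortComplex.mk _ _ (P.d_comp_d (n + 2) (n + 1) n)).Exact) :
    QuasiIso ((P.toSingle₀Equiv X).symm ⟨ε, w⟩) where
  quasiIsoAt n := by
    cases n with
    | zero =>
      rw [ChainComplex.quasiIsoAt₀_iff, ShortComplex.quasiIso_iff_of_zeros' _
        (P.shape 0 0 (by simp)) rfl rfl]
      have hε₀ : ((P.toSingle₀Equiv X).symm ⟨ε, w⟩).f 0 = ε :=
        ChainComplex.toSingle₀Equiv_symm_apply_f_zero ε w
      refine (ShortComplex.exact_and_epi_g_iff_of_iso ?_).2 ⟨hexact₀, hε⟩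
      exact ShortComplex.isoMk (Iso.refl (P.X 1)) (Iso.refl (P.X 0)) (Iso.refl X)
        ((Category.id_comp (P.d 1 0)).trans (Category.comp_id (P.d 1 0)).symm)
        ((Category.id_comp ε).trans (hε₀.symm.trans (Category.comp_id _).symm))
    | succ n =>
      rw [quasiIsoAt_iff_exactAt' _ _ (ChainComplex.exactAt_succ_single_obj _ _),
        P.exactAt_iff' (n + 2) (n + 1) n (by simp) (by simp)]
      exact hexact n

end Exactness

section DimensionShifting

variable {C : Type*} [Category* C] [Abelian C]

/-- The map `P₀ ⟶ X` of a projective resolution `P` of `X`, with codomain `X` itself rather than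
the degree-zero term of the complex `X[0]`. -/
noncomputable def augmentation {X : C} (P : ProjectiveResolution X) : P.complex.X 0 ⟶ X :=
  P.π.f 0

instance epi_augmentation {X : C} (P : ProjectiveResolution X) : Epi (augmentation P) :=
  inferInstanceAs (Epi (P.π.f 0))

lemma d_comp_augmentation_comp {X Y : C} (P : ProjectiveResolution X) (f : X ⟶ Y) :
    P.complex.d 1 0 ≫ augmentation P ≫ f = 0 :=
  (P.complex_d_comp_π_f_zero_assoc f).trans zero_comp

/-- The projective resolution `⋯ → P₁ → P₀ → X₂` of `X₃` obtained by splicing a projective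
resolution `P` of `X₁` with a short exact sequence `0 → X₁ → X₂ → X₃ → 0`. -/
noncomputable def spliceResolution {T : ShortComplex C} (hT : T.ShortExact) [hX₂ : Projective T.X₂]
    (P : ProjectiveResolution T.X₁) : ProjectiveResolution T.X₃ where
  complex := P.complex.augment (augmentation P ≫ T.f) (d_comp_augmentation_comp P T.f)
  projective
    | 0 => hX₂
    | n + 1 => P.projective n
  π := (ChainComplex.toSingle₀Equiv _ _).symm
    ⟨T.g, (Category.assoc _ _ _).trans ((congrArg _ T.zero).trans comp_zero)⟩
  quasiIso :=
    have := hT.mono_f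
    quasiIso_toSingle₀Equiv_symm hT.epi_g
      ((exact_epi_comp_iff (p := augmentation P) (f := T.f)).2 hT.exact) fun
      | 0 => (exact_comp_mono_iff (g := augmentation P) (i := T.f)).2 P.exact₀
      | n + 1 => P.exact_succ n

variable (R : Type*) [Ring R] [Linear R C]

/-- Augmenting a chain complex by an object in degree `0` shifts the cohomology of `Hom(-, N)` by
one, except in the two lowest degrees. -/
noncomputable def homologyLinearYonedaObjAugmentIso (P : ChainComplex C ℕ) {X : C} (f : P.X 0 ⟶ X)
    (w : P.d 1 0 ≫ f = 0) (N : C) (n : ℕ) :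
    ((P.augment f w).linearYonedaObj R N).homology (n + 2) ≅
      (P.linearYonedaObj R N).homology (n + 1) :=
  HomologicalComplex.homologyIsoSc' _ (n + 1) (n + 2) (n + 3) (by simp) (by simp) ≪≫
    ((P.linearYonedaObj R N).homologyIsoSc' n (n + 1) (n + 2) (by simp) (by simp)).symm

variable [EnoughProjectives C]

/-- Dimension shifting for `Ext` along a short exact sequence with projective middle term. -/
noncomputable def extDimensionShiftIso {T : ShortComplex C} (hT : T.ShortExact) [Projective T.X₂]
    (N : C) (n : ℕ) :
    ((Ext R C (n + 2)).obj (.op T.X₃)).obj N ≅ ((Ext R C (n + 1)).obj (.op T.X₁)).obj N :=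
  let P := projectiveResolution T.X₁
  (spliceResolution hT P).isoExt (n + 2) N ≪≫
    homologyLinearYonedaObjAugmentIso R P.complex _ (d_comp_augmentation_comp P T.f) N n ≪≫
    (P.isoExt (n + 1) N).symm

end DimensionShifting

section Syzygies

variable {C : Type*} [Category* C] [Abelian C]

/-- `IsSyzygy n M K` says that `K` is an `n`-th syzygy of `M`, i.e. the leftmost term of an exact
sequence `0 → K → P_{n-1} → ⋯ → P_0 → M → 0` with all `P_i` projective. The sequence is encoded by
the short exact sequences into which it splits. -/
inductive IsSyzygy : ℕ → C → C → Prop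
  | refl (M : C) : IsSyzygy 0 M M
  | of_shortExact {n : ℕ} {T : ShortComplex C} {K : C} (hT : T.ShortExact)
      (hproj : Projective T.X₂) (hK : IsSyzygy n T.X₁ K) : IsSyzygy (n + 1) T.X₃ K

namespace IsSyzygy

lemma of_exact {n : ℕ} {M : C} {F : ℕ → C} {d : ∀ i, F (i + 1) ⟶ F i} {e : F 0 ⟶ M}
    (hmono : Mono (d n)) (hmid : ∀ i < n, ∃ w, (ShortComplex.mk (d (i + 1)) (d i) w).Exact)
    (hexact : ∃ w, (ShortComplex.mk (d 0) e w).Exact) (hepi : Epi e)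
    (hproj : ∀ i ≤ n, Projective (F i)) : IsSyzygy (n + 1) M (F (n + 1)) := by
  obtain ⟨w, hexact⟩ := hexact
  induction n generalizing M F with
  | zero => exact .of_shortExact ⟨hexact⟩ (hproj 0 le_rfl) (.refl _)
  | succ n ih =>
    obtain ⟨w₁, hexact₁⟩ := hmid 0 n.succ_pos
    let d₀ : F 1 ⟶ kernel e := kernel.lift e (d 0) w
    have hd₀ : d₀ ≫ kernel.ι e = d 0 := kernel.lift_ι e (d 0) w
    have w₀ : d 1 ≫ d₀ = 0 := by
      rw [← cancel_mono (kernel.ι e), Category.assoc, hd₀, w₁, zero_comp]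
    have hexact₀ : (ShortComplex.mk (d 1) d₀ w₀).Exact := by
      rw [← exact_comp_mono_iff (i := kernel.ι e) (w' := by rw [hd₀, w₁])]
      simpa only [hd₀] using hexact₁
    have hker : IsSyzygy (n + 1) (kernel e) (F (n + 2)) :=
      ih (F := fun i ↦ F (i + 1)) (d := fun i ↦ d (i + 1)) (e := d₀) hmono
        (fun i hi ↦ hmid (i + 1) (by lia)) hexact.epi_kernelLift
        (fun i hi ↦ hproj (i + 1) (by lia)) w₀ hexact₀
    exact .of_shortExact ⟨ShortComplex.exact_kernel e⟩ (hproj 0 n.succ.zero_le) hker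

lemma nonempty_ext_iso (R : Type*) [Ring R] [Linear R C] [EnoughProjectives C] {n : ℕ} {M K : C}
    (hK : IsSyzygy n M K) (N : C) (k : ℕ) :
    Nonempty (((Ext R C (n + k + 1)).obj (.op M)).obj N ≅
      ((Ext R C (k + 1)).obj (.op K)).obj N) := by
  induction hK with
  | refl M => rw [Nat.zero_add]; exact ⟨Iso.refl _⟩
  | @of_shortExact n T K hT hproj _ ih =>
    obtain ⟨f⟩ := ih
    rw [Nat.add_right_comm n 1 k]
    exact ⟨extDimensionShiftIso R hT N (n + k) ≪≫ f⟩

end IsSyzygy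

end Syzygies

section Modules

universe v

variable {R : Type u} [Ring R]

lemma exists_shortComplex_exact {A B D : ModuleCat.{v} R} {f : A ⟶ B} {g : B ⟶ D}
    (h : Function.Exact f g) : ∃ w, (ShortComplex.mk f g w).Exact :=
  ⟨by ext x; exact h.apply_apply_eq_zero x, ModuleCat.shortComplex_exact _ h⟩

lemma IsSyzygy.of_function_exact {n : ℕ} {M : ModuleCat.{v} R}
    {F : ℕ → ModuleCat.{v} R} {d : ∀ i, F (i + 1) ⟶ F i} {e : F 0 ⟶ M}
    (hinj : Function.Injective (d n)) (hmid : ∀ i < n, Function.Exact (d (i + 1)) (d i))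
    (hexact : Function.Exact (d 0) e) (hsurj : Function.Surjective e)
    (hproj : ∀ i ≤ n, Module.Projective R (F i)) :
    IsSyzygy (n + 1) M (F (n + 1)) :=
  .of_exact ((ModuleCat.mono_iff_injective _).2 hinj)
    (fun i hi ↦ exists_shortComplex_exact (hmid i hi)) (exists_shortComplex_exact hexact)
    ((ModuleCat.epi_iff_surjective _).2 hsurj)
    fun i hi ↦
      have := hproj i hi
      (F i).projective_of_categoryTheory_projective

end Modules

theorem stmt7_general {R : Type u} [CommRing R] (S : Submonoid R) {C : Type*} [Category* C]
    [Abelian C] [Linear R C] [EnoughProjectives C] {n : ℕ} {M K : C} (hK : IsSyzygy n M K) (N : C)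
    (k : ℕ) :
    UnifSTorsion S (((Ext R C (n + k + 1)).obj (.op M)).obj N) ↔
      UnifSTorsion S (((Ext R C (k + 1)).obj (.op K)).obj N) := by
  obtain ⟨f⟩ := hK.nonempty_ext_iso R N k
  exact ⟨fun h ↦ h.of_linearEquiv f.toLinearEquiv, fun h ↦ h.of_linearEquiv f.symm.toLinearEquiv⟩

/-- Suppose `Ext^{n+1}(M, N)` is uniformly `S`-torsion for all `N` (`n ≥ 1`). If
`0 → F_n → ⋯ → F_1 → F_0 → M → 0` is exact with `F_0, …, F_{n-1}` projective, then `F_n`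
is `S`-projective, i.e. `Ext^1(F_n, N)` is uniformly `S`-torsion for every `N`. -/
theorem stmt7 {R : Type u} [CommRing R] (S : Submonoid R) (M : ModuleCat.{u} R)
    (n : ℕ) (hn : 1 ≤ n)
    (hext : ∀ N : ModuleCat.{u} R,
      UnifSTorsion S (((Ext R (ModuleCat.{u} R) (n + 1)).obj (Opposite.op M)).obj N))
    (F : ℕ → ModuleCat.{u} R) (d : ∀ i : ℕ, F (i + 1) ⟶ F i) (e : F 0 ⟶ M)
    (hinj : Function.Injective ⇑(d (n - 1)))
    (hmid : ∀ i : ℕ, i + 2 ≤ n → Function.Exact ⇑(d (i + 1)) ⇑(d i))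
    (hexact0 : Function.Exact ⇑(d 0) ⇑e)
    (hsurj : Function.Surjective ⇑e)
    (hproj : ∀ i : ℕ, i < n → Module.Projective R (F i)) :
    ∀ N : ModuleCat.{u} R,
      UnifSTorsion S (((Ext R (ModuleCat.{u} R) 1).obj (Opposite.op (F n))).obj N) := by
  obtain ⟨n, rfl⟩ := Nat.exists_eq_add_of_le' hn
  have hsyzygy : IsSyzygy (n + 1) M (F (n + 1)) := .of_function_exact hinj
    (fun i hi ↦ hmid i (by lia)) hexact0 hsurj fun i hi ↦ hproj i (by lia)
  exact fun N ↦ (stmt7_general S hsyzygy N 0).1 (hext N)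
end

section
/- Let R be a commutative ring, S a multiplicative subset of R, M an R-module and n ≥ 1 an integer such that Ext^{n+1}_R(N, M) is uniformly S-torsion for every R-module N. If 0 → M → E^0 → E^1 → ⋯ → E^{n-1} → E^n → 0 is an exact sequence of R-modules in which E^0, E^1, …, E^{n-1} are injective, then E^n is S-injective. -/
open CategoryTheory

universe u

/-!
For a short exact sequence `0 → A → I → B → 0`, a uniform `S`-annihilator of `Ext^m(N, I)` times
one of `Ext^{m+1}(N, A)` annihilates `Ext^m(N, B)`, by the covariant long exact sequence of `Ext`.
Cutting `0 → M → E⁰ → ⋯ → Eⁿ → 0` into short exact sequences and moving from left to right, the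
torsion of `Ext^{n+1}(N, M)` is thus passed on to `Ext¹(N, Eⁿ)`, provided that the modules
`Ext^{n-i}(N, Eⁱ)` with `i < n` are uniformly `S`-torsion. They vanish when the `Eⁱ` are injective.
-/

universe v w

open Limits Opposite

section UnifSTorsion

variable {R : Type u} [CommRing R] {S : Submonoid R} {A B C : Type*} [AddCommGroup A] [Module R A]
  [AddCommGroup B] [Module R B] [AddCommGroup C] [Module R C]

variable (S A) in
lemma unifSTorsion_of_subsingleton [Subsingleton A] : UnifSTorsion S A :=
  ⟨1, S.one_mem, fun _ => Subsingleton.elim _ _⟩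

lemma UnifSTorsion.of_exact (hA : UnifSTorsion S A) (hC : UnifSTorsion S C) {f : A →ₗ[R] B}
    {g : B →ₗ[R] C} (hfg : Function.Exact f g) : UnifSTorsion S B := by
  obtain ⟨s, hs, hsA⟩ := hA
  obtain ⟨t, ht, htC⟩ := hC
  refine ⟨s * t, S.mul_mem hs ht, fun b => ?_⟩
  obtain ⟨a, ha⟩ : ∃ a, f a = t • b := (hfg _).1 (by rw [map_smul, htC])
  rw [mul_smul, ← ha, ← map_smul, hsA, map_zero]

lemma UnifSTorsion.of_linearEquiv_s10 (hA : UnifSTorsion S A) (φ : A ≃ₗ[R] B) : UnifSTorsion S B := by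
  obtain ⟨s, hs, hsA⟩ := hA
  refine ⟨s, hs, fun b => ?_⟩
  rw [← φ.apply_symm_apply b, ← map_smul, hsA, map_zero]

end UnifSTorsion

section HomComplex

lemma linearCoyoneda_map_shortExact (R : Type*) [Ring R] {C : Type w} [Category.{v} C]
    [Preadditive C] [Balanced C] [Linear R C] (P : C) [Projective P] {T : ShortComplex C}
    (hT : T.ShortExact) :
    (T.map ((linearCoyoneda R C).obj (op P))).ShortExact where
  exact := by
    have := hT.mono_f
    rw [ShortComplex.moduleCat_exact_iff]
    exact fun x hx => ⟨hT.exact.lift x hx, hT.exact.lift_f x hx⟩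
  mono_f := by
    have := hT.mono_f
    exact (ModuleCat.mono_iff_injective _).2 fun x y hxy => (cancel_mono T.f).1 hxy
  epi_g := by
    have := hT.epi_g
    exact (ModuleCat.epi_iff_surjective _).2 fun (y : P ⟶ T.X₃) =>
      ⟨Projective.factorThru y T.g, Projective.factorThru_comp y T.g⟩

variable {C : Type w} [Category.{v} C] [Abelian C]

/-- The functor `Y ↦ Hom(K, Y)` sending an object to the cochain complex of morphisms into it from
a fixed chain complex `K`; on objects it is `K.linearYonedaObj R Y`, whose cohomology is `Ext` when
`K` is a projective resolution. -/
@[simps]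
def homComplexFunctor (R : Type*) [Ring R] [Linear R C] (K : ChainComplex C ℕ) :
    C ⥤ CochainComplex (ModuleCat R) ℕ where
  obj Y := K.linearYonedaObj R Y
  map φ :=
    { f i := ((linearYoneda R C).map φ).app (op (K.X i))
      comm' i j _ := (((linearYoneda R C).map φ).naturality (K.d j i).op).symm }

instance (R : Type*) [Ring R] [Linear R C] (K : ChainComplex C ℕ) :
    (homComplexFunctor R K).PreservesZeroMorphisms where

lemma homComplexFunctor_map_shortExact (R : Type*) [Ring R] [Linear R C] (K : ChainComplex C ℕ)
    [∀ i, Projective (K.X i)] {T : ShortComplex C} (hT : T.ShortExact) :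
    (T.map (homComplexFunctor R K)).ShortExact :=
  HomologicalComplex.shortExact_of_degreewise_shortExact _ fun i =>
    linearCoyoneda_map_shortExact R (K.X i) hT

end HomComplex

section Ext

variable {C : Type w} [Category.{v} C] [Abelian C] [EnoughProjectives C]

lemma isZero_Ext_succ_of_injective (R : Type*) [Ring R] [Linear R C] (N I : C) [Injective I]
    (n : ℕ) : IsZero (((Ext R C (n + 1)).obj (op N)).obj I) := by
  let P := projectiveResolution N
  refine IsZero.of_iso ?_ (P.isoExt (n + 1) I)
  rw [← HomologicalComplex.exactAt_iff_isZero_homology,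
    HomologicalComplex.exactAt_iff' _ n (n + 1) (n + 2) (by simp) (by simp),
    ShortComplex.moduleCat_exact_iff]
  exact fun f hf =>
    ⟨(P.exact_succ n).descToInjective f hf, (P.exact_succ n).comp_descToInjective f hf⟩

variable {R : Type u} [CommRing R] {S : Submonoid R} [Linear R C]

variable (S) in
lemma unifSTorsion_Ext_succ_of_injective (N I : C) [Injective I] (n : ℕ) :
    UnifSTorsion S (((Ext R C (n + 1)).obj (op N)).obj I) :=
  have := ModuleCat.subsingleton_of_isZero (isZero_Ext_succ_of_injective R N I n)
  unifSTorsion_of_subsingleton S _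

lemma UnifSTorsion.ext_X₃_of_shortExact {T : ShortComplex C} (hT : T.ShortExact) (N : C)
    {m₀ m₁ : ℕ} (hm : m₀ + 1 = m₁) (h₂ : UnifSTorsion S (((Ext R C m₀).obj (op N)).obj T.X₂))
    (h₁ : UnifSTorsion S (((Ext R C m₁).obj (op N)).obj T.X₁)) :
    UnifSTorsion S (((Ext R C m₀).obj (op N)).obj T.X₃) := by
  let P := projectiveResolution N
  have hHom : (T.map (homComplexFunctor R P.complex)).ShortExact :=
    homComplexFunctor_map_shortExact R P.complex hT
  have hexact := (ShortComplex.ShortExact.moduleCat_exact_iff_function_exact _).1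
    (hHom.homology_exact₃ m₀ m₁ hm)
  have h₂' := h₂.of_linearEquiv_s10 (P.isoExt m₀ T.X₂).toLinearEquiv
  have h₁' := h₁.of_linearEquiv_s10 (P.isoExt m₁ T.X₁).toLinearEquiv
  exact (h₂'.of_exact h₁' hexact).of_linearEquiv_s10 (P.isoExt m₀ T.X₃).symm.toLinearEquiv

end Ext

lemma exists_exact_cokernelDesc {C : Type w} [Category.{v} C] [HasZeroMorphisms C]
    {W X Y Z : C} {f : W ⟶ X} [HasCokernel f] {g : X ⟶ Y} {h : Y ⟶ Z} (wf : f ≫ g = 0)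
    (wh : g ≫ h = 0) (hgh : (ShortComplex.mk g h wh).Exact) :
    ∃ w : cokernel.desc f g wf ≫ h = 0, (ShortComplex.mk (cokernel.desc f g wf) h w).Exact := by
  have w : cokernel.desc f g wf ≫ h = 0 := by
    rw [← cancel_epi (cokernel.π f), cokernel.π_desc_assoc, wh, comp_zero]
  let φ : ShortComplex.mk g h wh ⟶ ShortComplex.mk (cokernel.desc f g wf) h w :=
    { τ₁ := cokernel.π f, τ₂ := 𝟙 Y, τ₃ := 𝟙 Z }
  exact ⟨w, (ShortComplex.exact_iff_of_epi_of_isIso_of_mono φ).1 hgh⟩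

lemma exists_exact_of_function_exact {R : Type*} [Ring R] {X Y Z : ModuleCat.{v} R} {f : X ⟶ Y}
    {g : Y ⟶ Z} (h : Function.Exact f g) : ∃ w : f ≫ g = 0, (ShortComplex.mk f g w).Exact :=
  ⟨ModuleCat.hom_ext (LinearMap.ext h.apply_apply_eq_zero),
    (ShortComplex.ShortExact.moduleCat_exact_iff_function_exact _).2 h⟩

theorem stmt10_general {R : Type u} [CommRing R] (S : Submonoid R) {C : Type w} [Category.{v} C]
    [Abelian C] [Linear R C] [EnoughProjectives C] (N M : C) (m n : ℕ)
    (hM : UnifSTorsion S (((Ext R C (n + 1 + m)).obj (op N)).obj M))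
    (E : ℕ → C) (e : M ⟶ E 0) (d : ∀ i : ℕ, E i ⟶ E (i + 1)) [Mono e]
    (hexact₀ : ∃ w : e ≫ d 0 = 0, (ShortComplex.mk e (d 0) w).Exact)
    (hmid : ∀ i < n, ∃ w : d i ≫ d (i + 1) = 0, (ShortComplex.mk (d i) (d (i + 1)) w).Exact)
    [Epi (d n)]
    (hE : ∀ i j : ℕ, i + j = n → UnifSTorsion S (((Ext R C (j + m)).obj (op N)).obj (E i))) :
    UnifSTorsion S (((Ext R C m).obj (op N)).obj (E (n + 1))) := by
  obtain ⟨w₀, hexact₀⟩ := hexact₀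
  induction n generalizing M E with
  | zero =>
    have hE₀ : UnifSTorsion S (((Ext R C m).obj (op N)).obj (E 0)) := zero_add m ▸ hE 0 0 rfl
    exact .ext_X₃_of_shortExact (.mk' hexact₀ ‹_› ‹_›) N (by lia) hE₀ hM
  | succ n ih =>
    have hcoker : UnifSTorsion S (((Ext R C (n + 1 + m)).obj (op N)).obj (cokernel e)) :=
      .ext_X₃_of_shortExact (.mk' (ShortComplex.exact_cokernel e) ‹_› inferInstance) N (by lia)
        (hE 0 (n + 1) (zero_add _)) hM
    have : Mono (cokernel.desc e (d 0) w₀) := hexact₀.mono_cokernelDesc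
    obtain ⟨w₁, hexact₁⟩ := hmid 0 n.succ_pos
    obtain ⟨w, hexact⟩ := exists_exact_cokernelDesc w₀ w₁ hexact₁
    exact ih (cokernel e) hcoker (fun i => E (i + 1)) (cokernel.desc e (d 0) w₀)
      (fun i => d (i + 1)) (fun i hi => hmid (i + 1) (by lia))
      (fun i j hij => hE (i + 1) j (by lia)) w hexact

/-- Suppose `Ext^{n+1}(N, M)` is uniformly `S`-torsion for all `N` (`n ≥ 1`). If
`0 → M → E^0 → ⋯ → E^{n-1} → E^n → 0` is exact with `E^0, …, E^{n-1}` injective, then `E^n`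
is `S`-injective, i.e. `Ext^1(N, E^n)` is uniformly `S`-torsion for every `N`. -/
theorem stmt10 {R : Type u} [CommRing R] (S : Submonoid R) (M : ModuleCat.{u} R)
    (n : ℕ) (hn : 1 ≤ n)
    (hext : ∀ N : ModuleCat.{u} R,
      UnifSTorsion S (((Ext R (ModuleCat.{u} R) (n + 1)).obj (Opposite.op N)).obj M))
    (E : ℕ → ModuleCat.{u} R) (e : M ⟶ E 0) (d : ∀ i : ℕ, E i ⟶ E (i + 1))
    (hinj : Function.Injective ⇑e)
    (hexact0 : Function.Exact ⇑e ⇑(d 0))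
    (hmid : ∀ i : ℕ, i + 2 ≤ n → Function.Exact ⇑(d i) ⇑(d (i + 1)))
    (hsurj : Function.Surjective ⇑(d (n - 1)))
    (hinjmod : ∀ i : ℕ, i < n → Module.Injective R (E i)) :
    ∀ N : ModuleCat.{u} R,
      UnifSTorsion S (((Ext R (ModuleCat.{u} R) 1).obj (Opposite.op N)).obj (E n)) := by
  intro N
  obtain ⟨n, rfl⟩ := Nat.exists_eq_add_of_le' hn
  have : Mono e := (ModuleCat.mono_iff_injective e).2 hinj
  have : Epi (d n) := (ModuleCat.epi_iff_surjective (d n)).2 hsurj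
  have hE (i : ℕ) (hi : i ≤ n) : Injective (E i) :=
    (Module.injective_iff_injective_object R (E i)).1 (hinjmod i (by lia))
  exact stmt10_general S N M 1 n (hext N) E e d (exists_exact_of_function_exact hexact0)
    (fun i hi => exists_exact_of_function_exact (hmid i (by lia)))
    (fun i j hij => have := hE i (by lia); unifSTorsion_Ext_succ_of_injective S N (E i) j)
end

section
/- Let R be a commutative ring, M an R-module and n ≥ 0 an integer. Then Ext^{n+1}_R(M, N) = 0 for every R-module N if and only if for every maximal ideal 𝔪 of R and every R-module N there exists s ∈ R ∖ 𝔪 such that s·Ext^{n+1}_R(M, N) = 0. (That is, pd_R(M) = sup{(R∖𝔪)-pd_R(M) : 𝔪 ∈ Max(R)}.) -/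
open CategoryTheory

universe u

theorem eq_zero_of_forall_isMaximal_exists_smul_eq_zero {R E : Type*} [Semiring R]
    [AddCommMonoid E] [Module R E] {x : E}
    (h : ∀ 𝔪 : Ideal R, 𝔪.IsMaximal → ∃ s : R, s ∉ 𝔪 ∧ s • x = 0) : x = 0 := by
  by_contra hx
  have torsionOf_ne_top : Ideal.torsionOf R E x ≠ ⊤ :=
    mt (Ideal.torsionOf_eq_top_iff R x).mp hx
  obtain ⟨𝔪, h𝔪, torsionOf_le⟩ := Ideal.exists_le_maximal _ torsionOf_ne_top
  obtain ⟨s, hs, hsx⟩ := h 𝔪 h𝔪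
  exact hs (torsionOf_le ((Ideal.mem_torsionOf_iff x s).mpr hsx))

theorem stmt14_general {R : Type*} [Ring R] {C : Type*} [Category* C] [Abelian C] [Linear R C]
    [EnoughProjectives C] (X : C) (n : ℕ) :
    List.TFAE [
      ∀ Y : C, ∀ x : ((Ext R C n).obj (Opposite.op X)).obj Y, x = 0,
      ∀ 𝔪 : Ideal R, 𝔪.IsMaximal → ∀ Y : C,
        ∃ s : R, s ∉ 𝔪 ∧ ∀ x : ((Ext R C n).obj (Opposite.op X)).obj Y, s • x = 0,
      ∀ 𝔪 : Ideal R, 𝔪.IsMaximal → ∀ Y : C,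
        ∀ x : ((Ext R C n).obj (Opposite.op X)).obj Y, ∃ s : R, s ∉ 𝔪 ∧ s • x = 0] := by
  tfae_have 1 → 2 := fun vanish 𝔪 h𝔪 Y ↦
    ⟨1, (Ideal.ne_top_iff_one 𝔪).mp h𝔪.ne_top, fun x ↦ by rw [vanish Y x, smul_zero]⟩
  tfae_have 2 → 3 := fun uniform 𝔪 h𝔪 Y x ↦
    (uniform 𝔪 h𝔪 Y).imp fun _ ⟨hs, kill⟩ ↦ ⟨hs, kill x⟩
  tfae_have 3 → 1 := fun torsion Y x ↦
    eq_zero_of_forall_isMaximal_exists_smul_eq_zero fun 𝔪 h𝔪 ↦ torsion 𝔪 h𝔪 Y x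
  tfae_finish

/-- `Ext^{n+1}_R(M, N)` vanishes for every `N` iff for every maximal ideal `𝔪` and every `N`
some `s ∈ R ∖ 𝔪` kills `Ext^{n+1}_R(M, N)`; i.e. `pd_R(M) = sup { (R∖𝔪)-pd_R(M) }`. -/
theorem stmt14 {R : Type u} [CommRing R] (M : ModuleCat.{u} R) (n : ℕ) :
    (∀ N : ModuleCat.{u} R,
        ∀ x : ((Ext R (ModuleCat.{u} R) (n + 1)).obj (Opposite.op M)).obj N, x = 0) ↔
      (∀ 𝔪 : Ideal R, 𝔪.IsMaximal → ∀ N : ModuleCat.{u} R,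
        ∃ s : R, s ∉ 𝔪 ∧
          ∀ x : ((Ext R (ModuleCat.{u} R) (n + 1)).obj (Opposite.op M)).obj N,
            s • x = 0) :=
  (stmt14_general M (n + 1)).out 0 1
end
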